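/- Let K and E be number fields that are arithmetically disjoint, i.e., no rational prime ramifies in both. Then the ring of integers of the compositum KE equals the compositum O_K · O_E of the rings of integers. -/

import Mathlib

open NumberField

/-!
The proof rests on a trace identity that needs no linear disjointness. Let `L` be the compositum
of number fields `K` and `E`, let `b` be an integral basis of `K`, and let `b*` be its dual for the
trace form. Then every `x : L` satisfies `x = ∑ i, b* i * Tr_{L/E} (b i * x)`
(`sum_traceDual_mul_trace`). Indeed, over an algebraic closure the right-hand side is
`∑ σ, (∑ i, b* i * σ (b i)) * σ x`, with `σ` running over the `E`-embeddings of `L`. The inner sum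
is `1` or `0` according to whether `σ` is the identity on `K` or not
(`sum_traceDual_mul_embedding`), and since `K` and `E` generate `L`, the only `σ` that is the
identity on `K` is the inclusion.

For `x` integral, the traces lie in `O_E`, while `discr K * b* i` lies in `O_K`. Hence
`discr K * O_L ⊆ O_K · O_E`, and by symmetry `discr E * O_L ⊆ O_K · O_E`. Coprimality of the
discriminants gives `O_L ⊆ O_K · O_E`.
-/

/-- The matrix `(σ (b* i))` indexed by embeddings and basis elements is inverse to the transpose of
`(σ (b j))`. This is the entry of the product, in the order indexed by embeddings, at the pair
`(τ₀, τ)`. -/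
lemma sum_traceDual_mul_embedding {F K Ω ι : Type*} [Field F] [Field K] [Field Ω] [Algebra F K]
    [Algebra F Ω] [FiniteDimensional F K] [Algebra.IsSeparable F K] [IsAlgClosed Ω] [Fintype ι]
    [DecidableEq ι] (b : Module.Basis ι F K) (τ₀ τ : K →ₐ[F] Ω) [Decidable (τ₀ = τ)] :
    ∑ i, τ₀ (b.traceDual i) * τ (b i) = if τ₀ = τ then 1 else 0 := by
  classical
  let M : Matrix ι (K →ₐ[F] Ω) Ω := .of fun i σ ↦ σ (b i)
  let N : Matrix (K →ₐ[F] Ω) ι Ω := .of fun σ i ↦ σ (b.traceDual i)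
  have hcard : Fintype.card ι = Fintype.card (K →ₐ[F] Ω) := by
    rw [AlgHom.card, Module.finrank_eq_card_basis b]
  have hMN : M * N = 1 := by
    ext j i
    have h := trace_eq_sum_embeddings (K := F) Ω (x := b.traceDual i * b j)
    rw [b.trace_traceDual_mul] at h
    simp only [M, N, Matrix.mul_apply, Matrix.of_apply, Matrix.one_apply]
    simp only [map_mul] at h
    simp_rw [mul_comm (_ : Ω) (_ : Ω)] at h ⊢
    split_ifs at h ⊢ <;> simpa using h.symm
  have hNM : N * M = 1 := (Matrix.mul_eq_one_comm_of_card_eq _ _ _ hcard).mp hMN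
  have := congrFun (congrFun hNM τ₀) τ
  simp only [M, N, Matrix.mul_apply, Matrix.of_apply, Matrix.one_apply] at this
  rw [this]
  congr

/-- If `K` and `E` generate `L`, then the trace-dual bases `b` and `b*` of `K` reconstruct every
element of `L` from traces down to `E`, even though `b` need not be linearly independent over
`E`. The identity does not involve `Ω`, an auxiliary algebraically closed field in which traces
become sums over embeddings. -/
lemma sum_traceDual_mul_trace {K E L ι : Type*} (Ω : Type*) [Field K] [Field E] [Field L]
    [NumberField K] [NumberField E] [NumberField L] [Algebra K L] [Algebra E L] [Field Ω]
    [CharZero Ω] [IsAlgClosed Ω] [Algebra L Ω] [Algebra E Ω] [IsScalarTower E L Ω]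
    (hgen : (algebraMap K L).fieldRange ⊔ (algebraMap E L).fieldRange = ⊤)
    [Fintype ι] [DecidableEq ι] (b : Module.Basis ι ℚ K) (x : L) :
    ∑ i, algebraMap K L (b.traceDual i) *
      algebraMap E L (Algebra.trace E L (algebraMap K L (b i) * x)) = x := by
  classical
  have : FiniteDimensional E L := FiniteDimensional.right ℚ E L
  let ι₀ : L →ₐ[E] Ω := IsScalarTower.toAlgHom E L Ω
  let r (σ : L →ₐ[E] Ω) : K →ₐ[ℚ] Ω := ((σ : L →+* Ω).comp (algebraMap K L)).toRatAlgHom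
  have hr : ∀ σ, r ι₀ = r σ ↔ ι₀ = σ := by
    refine fun σ ↦ ⟨fun h ↦ ?_, fun h ↦ by rw [h]⟩
    have hle : (⊤ : Subfield L) ≤ (ι₀ : L →+* Ω).eqLocusField (σ : L →+* Ω) := by
      rw [← hgen, sup_le_iff]
      constructor
      · rintro _ ⟨y, rfl⟩
        exact DFunLike.congr_fun h y
      · rintro _ ⟨y, rfl⟩
        exact (ι₀.commutes y).trans (σ.commutes y).symm
    ext y
    exact hle (Subfield.mem_top y)
  apply (algebraMap L Ω).injective
  calc algebraMap L Ω (∑ i, algebraMap K L (b.traceDual i) *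
        algebraMap E L (Algebra.trace E L (algebraMap K L (b i) * x)))
      = ∑ i, r ι₀ (b.traceDual i) * ∑ σ : L →ₐ[E] Ω, r σ (b i) * σ x := by
        rw [map_sum]
        refine Finset.sum_congr rfl fun i _ ↦ ?_
        rw [map_mul, ← IsScalarTower.algebraMap_apply E L Ω, trace_eq_sum_embeddings Ω]
        simp only [map_mul]
        rfl
    _ = ∑ σ : L →ₐ[E] Ω, (∑ i, r ι₀ (b.traceDual i) * r σ (b i)) * σ x := by
        simp_rw [Finset.mul_sum, Finset.sum_mul, mul_assoc]
        exact Finset.sum_comm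
    _ = algebraMap L Ω x := by
        simp_rw [sum_traceDual_mul_embedding, hr, ite_mul, one_mul, zero_mul]
        simp [ι₀]

lemma isIntegral_discr_mul_traceDual {K : Type*} [Field K] [NumberField K]
    (i : Module.Free.ChooseBasisIndex ℤ (𝓞 K)) :
    IsIntegral ℤ ((discr K : K) * (integralBasis K).traceDual i) := by
  classical
  have hb : ∀ j, IsIntegral ℤ (integralBasis K j) := fun j ↦ by
    rw [integralBasis_apply]
    exact RingOfIntegers.isIntegral_coe _
  have hmem : (integralBasis K).traceDual i ∈
      Submodule.traceDual ℤ ℚ (1 : Submodule (𝓞 K) K) := by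
    have hspan : Submodule.span ℤ (Set.range (integralBasis K)) =
        (1 : Submodule (𝓞 K) K).restrictScalars ℤ := by
      ext y
      rw [mem_span_integralBasis]
      simp
    have := Submodule.traceDual_span_of_basis ℤ (1 : Submodule (𝓞 K) K) (integralBasis K)
      hspan.symm
    rw [← Submodule.restrictScalars_mem ℤ, this]
    exact Submodule.subset_span ⟨i, rfl⟩
  have := isIntegral_discr_mul_of_mem_traceDual (1 : Submodule (𝓞 K) K) hb
    (Submodule.one_le.mp le_rfl) hmem
  rw [← coe_discr] at this
  simpa [Algebra.smul_def] using this

lemma discr_mul_mem_adjoin {K E L : Type*} [Field K] [Field E] [Field L] [NumberField K]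
    [NumberField E] [NumberField L] [Algebra K L] [Algebra E L]
    (hgen : (algebraMap K L).fieldRange ⊔ (algebraMap E L).fieldRange = ⊤)
    {x : L} (hx : IsIntegral ℤ x) :
    (discr K : L) * x ∈ Algebra.adjoin ℤ
      (algebraMap K L '' (integralClosure ℤ K : Set K) ∪
        algebraMap E L '' (integralClosure ℤ E : Set E)) := by
  classical
  have : FiniteDimensional E L := FiniteDimensional.right ℚ E L
  rw [← sum_traceDual_mul_trace (AlgebraicClosure L) hgen (integralBasis K) x, Finset.mul_sum]
  refine sum_mem fun i _ ↦ ?_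
  rw [← mul_assoc, ← map_intCast (algebraMap K L), ← map_mul]
  refine mul_mem (Algebra.subset_adjoin (.inl ⟨_, isIntegral_discr_mul_traceDual i, rfl⟩))
    (Algebra.subset_adjoin (.inr ⟨_, Algebra.isIntegral_trace (.mul ?_ hx), rfl⟩))
  rw [integralBasis_apply]
  exact (RingOfIntegers.isIntegral_coe _).algebraMap

/-- If `K` and `E` are arithmetically disjoint number fields (coprime discriminants),
then the ring of integers of the compositum `KE` is the compositum `O_K · O_E`. -/
theorem stmt_4 (K E : IntermediateField ℚ (AlgebraicClosure ℚ))
    [NumberField ↥K] [NumberField ↥E] [NumberField ↥(K ⊔ E)]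
    (h : IsCoprime (NumberField.discr ↥K) (NumberField.discr ↥E)) :
    integralClosure ℤ ↥(K ⊔ E) = Algebra.adjoin ℤ
      (((IntermediateField.inclusion (le_sup_left : K ≤ K ⊔ E)) ''
          (integralClosure ℤ ↥K : Set ↥K)) ∪
        ((IntermediateField.inclusion (le_sup_right : E ≤ K ⊔ E)) ''
          (integralClosure ℤ ↥E : Set ↥E))) := by
  let iK := IntermediateField.inclusion (le_sup_left : K ≤ K ⊔ E)
  let iE := IntermediateField.inclusion (le_sup_right : E ≤ K ⊔ E)
  let _ : Algebra K ↥(K ⊔ E) := (iK : K →+* ↥(K ⊔ E)).toAlgebra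
  let _ : Algebra E ↥(K ⊔ E) := (iE : E →+* ↥(K ⊔ E)).toAlgebra
  have hgen : (algebraMap K ↥(K ⊔ E)).fieldRange ⊔ (algebraMap E ↥(K ⊔ E)).fieldRange = ⊤ := by
    set S := (algebraMap K ↥(K ⊔ E)).fieldRange ⊔ (algebraMap E ↥(K ⊔ E)).fieldRange with hS
    let T : IntermediateField ℚ (AlgebraicClosure ℚ) :=
      (S.map (K ⊔ E).val.toRingHom).toIntermediateField fun q ↦ by
        rw [eq_ratCast]
        exact SubfieldClass.ratCast_mem _ q
    have hT : K ⊔ E ≤ T := by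
      refine sup_le (fun y hy ↦ ?_) (fun y hy ↦ ?_)
      · exact ⟨iK ⟨y, hy⟩, (le_sup_left.trans hS.ge) ⟨⟨y, hy⟩, rfl⟩, rfl⟩
      · exact ⟨iE ⟨y, hy⟩, (le_sup_right.trans hS.ge) ⟨⟨y, hy⟩, rfl⟩, rfl⟩
    refine top_unique fun y _ ↦ ?_
    obtain ⟨z, hz, hzy⟩ := hT y.2
    rwa [← Subtype.ext hzy]
  refine le_antisymm (fun x hx ↦ ?_) (Algebra.adjoin_le ?_)
  · have hK := discr_mul_mem_adjoin hgen hx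
    have hE := discr_mul_mem_adjoin (sup_comm _ _ |>.trans hgen) hx
    rw [Set.union_comm] at hE
    obtain ⟨u, v, huv⟩ := h
    have huv' : (u : ↥(K ⊔ E)) * discr K + v * discr E = 1 := by exact_mod_cast huv
    have hx' : x = u • ((discr K : ↥(K ⊔ E)) * x) + v • ((discr E : ↥(K ⊔ E)) * x) := by
      rw [zsmul_eq_mul, zsmul_eq_mul, ← mul_assoc, ← mul_assoc, ← add_mul, huv', one_mul]
    rw [hx']
    exact add_mem (zsmul_mem hK u) (zsmul_mem hE v)
  · rintro _ (⟨y, hy, rfl⟩ | ⟨y, hy, rfl⟩)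
    · exact IsIntegral.map (iK.restrictScalars ℤ) hy
    · exact IsIntegral.map (iE.restrictScalars ℤ) hy
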